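/- arXiv:1902.07136 — 2 statements merged into one kernel-verified Lean document; each statement's English description precedes it below -/
import Mathlib

section
/- Let P₀ be the 5 × 3 matrix over GF(4) with rows (1,α,0), (α,α²,0), (α,0,α²), (1,0,α), (0,1,1), and let A = [I₅ | D₅ | P₀] be the 5 × 18 matrix over GF(4) obtained by placing the 5 × 5 identity matrix, the matrix D₅, and P₀ side by side. A field F realizes the column matroid of A if and only if F is infinite or has at least 4 elements. (The universal partial field of this matroid is the 2-cyclotomic partial field 𝕂₂.) -/
/-- A field `F` realizes the column matroid of a matrix `A` over `K` if some matrix `B`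
over `F` with the same column index set has exactly the same linearly independent sets
of columns as `A`. -/
def RealizesColumnMatroid {K : Type*} [Field K] {m k : ℕ}
    (A : Matrix (Fin m) (Fin k) K) (F : Type*) [Field F] : Prop :=
  ∃ (n : ℕ) (B : Matrix (Fin n) (Fin k) F),
    ∀ S : Set (Fin k),
      LinearIndependent F (fun j : S => B.transpose (j : Fin k)) ↔
        LinearIndependent K (fun j : S => A.transpose (j : Fin k))

/-- The matrix `[I₅ | D₅ | P₀]` over `GF(4)`, where `D₅` is the (mod-2) signed incidence
matrix of `K₅` and `P₀` is matrix `V` of the paper. -/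
noncomputable def matI5D5P0 (α : GaloisField 2 2) :
    Matrix (Fin 5) (Fin 18) (GaloisField 2 2) :=
  !![1, 0, 0, 0, 0,  1, 1, 1, 1, 0, 0, 0, 0, 0, 0,  1, α, 0;
     0, 1, 0, 0, 0,  1, 0, 0, 0, 1, 1, 1, 0, 0, 0,  α, α ^ 2, 0;
     0, 0, 1, 0, 0,  0, 1, 0, 0, 1, 0, 0, 1, 1, 0,  α, 0, α ^ 2;
     0, 0, 0, 1, 0,  0, 0, 1, 0, 0, 1, 0, 1, 0, 1,  1, 0, α;
     0, 0, 0, 0, 1,  0, 0, 0, 1, 0, 0, 1, 0, 1, 1,  0, 1, 1]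

/-! Lift the matrix to an arbitrary field `K`, up to column scaling, with signs and with `r ∈ K` in
the role of `α`. A set of columns spans iff no nonzero row vector `y` kills all of them. A column of
`[I | D]` is killed by `y` when `y i = 0` or `y i = y j`, and one of the last three columns when two
of the forms `y 0 - r y 1`, `y 3 - r y 2`, `y 4 - r y 4` agree on `y`. The former conditions are
preserved on replacing each `y i` by `g (y i) - g 0`, for any function `g : K → L` whatsoever. If
`r ∉ {0, 1, -1}` and `s ≠ 0`, one can choose `g` so that the new vector is nonzero and so that two
forms at `s` agree on it whenever those at `r` agree on `y`. Hence the column matroid does not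
depend on the field nor on the choice of `r ∉ {0, 1, -1}`, and such an `r` exists in every field
with at least four elements. Conversely, contracting three columns leaves a line with five points,
whereas a line over a field with `q` elements has only `q + 1` points. -/

open Matrix Module Submodule

section LinearAlgebra

variable {K L V W ι : Type*} [Field K] [Field L] [AddCommGroup V] [Module K V]
  [AddCommGroup W] [Module L W]

theorem span_col_image_eq_top_iff {m : Type*} [Fintype m] (M : Matrix m ι K) (S : Set ι) :
    span K (M.col '' S) = ⊤ ↔ ∀ y : m → K, (∀ j ∈ S, (y ᵥ* M) j = 0) → y = 0 := by
  classical
  constructor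
  · intro hS y hy
    have hker : span K (M.col '' S) ≤ LinearMap.ker (dotProductEquiv K m y) := by
      rw [span_le]
      rintro _ ⟨j, hj, rfl⟩
      exact hy j hj
    rwa [hS, top_le_iff, LinearMap.ker_eq_top, LinearEquiv.map_eq_zero_iff] at hker
  · intro h
    by_contra hS
    obtain ⟨f, hf, hker⟩ := exists_le_ker_of_lt_top _ (lt_top_iff_ne_top.mpr hS)
    obtain ⟨y, rfl⟩ := (dotProductEquiv K m).surjective f
    have hy : y = 0 := h y fun j hj => hker (subset_span ⟨j, hj, rfl⟩)
    exact hf (by rw [hy, map_zero])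

theorem linearIndepOn_of_span_image_eq_top {v : ι → V} {S : Set ι} [Fintype S]
    (hcard : Fintype.card S = finrank K V) (hspan : span K (v '' S) = ⊤) :
    LinearIndepOn K v S :=
  linearIndependent_of_top_le_span_of_card_eq_finrank
    (by rw [← Set.image_eq_range, hspan]) hcard

theorem linearIndepOn_of_forall_span_image_eq_top [FiniteDimensional K V] {v : ι → V} {w : ι → W}
    (hrank : finrank K V = finrank L W) (hv : span K (Set.range v) = ⊤)
    (hspan : ∀ T : Set ι, span K (v '' T) = ⊤ → span L (w '' T) = ⊤) {S : Set ι}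
    (hS : LinearIndepOn K v S) : LinearIndepOn L w S := by
  set T := hS.extend S.subset_univ
  have hT : LinearIndepOn K v T := hS.linearIndepOn_extend _
  have hvT : span K (v '' T) = ⊤ := by
    rw [hS.span_image_extend_eq_span_image, Set.image_univ, hv]
  have : Finite T := LinearIndependent.finite_of_isNoetherian hT
  have := Fintype.ofFinite T
  have hcard : Fintype.card T = finrank K V := by
    rw [← finrank_span_eq_card hT, ← Set.image_eq_range, hvT, finrank_top]
  exact (linearIndepOn_of_span_image_eq_top (hcard.trans hrank) (hspan T hvT)).mono
    (hS.subset_extend _)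

theorem card_le_card_add_one_of_pairwise_linearIndependent [Finite K] (hV : finrank K V = 2)
    {v : ι → V} (hv : Pairwise fun i j => LinearIndependent K ![v i, v j]) :
    Nat.card ι ≤ Nat.card K + 1 := by
  rcases subsingleton_or_nontrivial ι with _ | _
  · exact (Finite.card_le_one_iff_subsingleton.mpr ‹_›).trans (Nat.le_add_left _ _)
  have hv0 (i : ι) : v i ≠ 0 := by
    obtain ⟨j, hij⟩ := exists_ne i
    exact (hv hij.symm).ne_zero 0
  have : FiniteDimensional K V := .of_finrank_eq_succ hV
  have : Finite V := Module.finite_of_finite K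
  rw [← Projectivization.card_of_finrank_two K V hV]
  refine Nat.card_le_card_of_injective (fun i => Projectivization.mk K (v i) (hv0 i))
    fun i j hij => ?_
  by_contra hne
  obtain ⟨a, ha⟩ := (Projectivization.mk_eq_mk_iff' K _ _ _ _).mp hij
  exact one_ne_zero (LinearIndependent.pair_iff.mp (hv hne) 1 (-a) (by simp [ha])).1

theorem ncard_le_card_add_one_of_line_minor [Finite K] {v : ι → V} {D C : Set ι}
    (hDC : Disjoint D C) (hC : C.Nontrivial)
    (hpair : C.Pairwise fun i j => LinearIndepOn K v (D ∪ {i, j}))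
    (htriple : ∀ i ∈ C, ∀ j ∈ C, ∀ k ∈ C, i ≠ j → k ∉ ({i, j} : Set ι) →
      ¬ LinearIndepOn K v (D ∪ {k, i, j})) :
    C.ncard ≤ Nat.card K + 1 := by
  set u := (span K (v '' D)).mkQ ∘ v
  have hquot {T : Set ι} (hT : T ⊆ C) :
      LinearIndepOn K v (D ∪ T) ↔ LinearIndepOn K v D ∧ LinearIndepOn K u T :=
    linearIndepOn_union_iff_quotient (hDC.mono_right hT)
  have hu : C.Pairwise fun i j => LinearIndepOn K u {i, j} := fun i hi j hj hij =>
    ((hquot (Set.pair_subset hi hj)).mp (hpair hi hj hij)).2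
  obtain ⟨i, hi, j, hj, hij⟩ := hC
  have hD : LinearIndepOn K v D := (hpair hi hj hij).mono Set.subset_union_left
  have hmem (k : C) : u k ∈ span K (u '' {i, j}) := by
    by_cases hk : (k : ι) ∈ ({i, j} : Set ι)
    · exact subset_span (Set.mem_image_of_mem u hk)
    · by_contra hspan
      have hsub : {↑k, i, j} ⊆ C := Set.insert_subset k.2 (Set.pair_subset hi hj)
      exact htriple i hi j hj k k.2 hij hk ((hquot hsub).mpr
        ⟨hD, (linearIndepOn_insert hk).mpr ⟨hu hi hj hij, hspan⟩⟩)
  have hrank : finrank K (span K (u '' {i, j})) = 2 := by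
    classical
    rw [Set.image_eq_range u {i, j}]
    exact (finrank_span_eq_card (hu hi hj hij)).trans (by simp [hij])
  refine card_le_card_add_one_of_pairwise_linearIndependent hrank
    (v := fun k : C => ⟨u k, hmem k⟩) fun a b hab => ?_
  have hab' : (a : ι) ≠ b := Subtype.coe_ne_coe.mpr hab
  simpa [LinearIndependent.pair_iff, LinearIndepOn.pair_iff u hab', Subtype.ext_iff] using
    hu a.2 b.2 hab'

end LinearAlgebra

theorem exists_ne_zero_ne_one_ne_neg_one {F : Type*} [Field F]
    (hF : Infinite F ∨ 4 ≤ Nat.card F) : ∃ r : F, r ≠ 0 ∧ r ≠ 1 ∧ r ≠ -1 := by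
  classical
  suffices h : ∃ r, r ∉ ({0, 1, -1} : Finset F) by
    simpa only [Finset.mem_insert, Finset.mem_singleton, not_or] using h
  rcases hF with _ | hcard
  · exact Infinite.exists_notMem_finset _
  · have : Finite F := Nat.finite_of_card_ne_zero (by omega)
    have := Fintype.ofFinite F
    rw [Nat.card_eq_fintype_card, ← Finset.card_univ] at hcard
    obtain ⟨r, -, hr⟩ :=
      Finset.exists_mem_notMem_of_card_lt_card (Finset.card_le_three.trans_lt hcard)
    exact ⟨r, hr⟩

section GainForms

variable {K L : Type*} [Field K] [Field L] {r : K} {s : L}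

theorem exists_map_sub_mul_map_eq (hr1 : r ≠ 1) (hrn : r ≠ -1) (hs : s ≠ 0) {p q p' q' : K}
    (hne : p ≠ p') (h : p - r * q = p' - r * q') :
    ∃ g : K → L, g p ≠ g p' ∧ g p - s * g q = g p' - s * g q' := by
  classical
  have hq : q ≠ q' := by rintro rfl; exact hne (by linear_combination h)
  have hpq : ¬ (p = q ∧ p' = q') := by
    rintro ⟨rfl, rfl⟩
    exact hne (mul_left_cancel₀ (sub_ne_zero.mpr hr1) (by linear_combination -h))
  have hpq' : ¬ (p = q' ∧ p' = q) := by
    rintro ⟨rfl, rfl⟩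
    exact hne (mul_left_cancel₀ (sub_ne_zero.mpr hrn) (by linear_combination h))
  by_cases h1 : p = q
  · refine ⟨Pi.single p' s + Pi.single q' 1, ?_, ?_⟩ <;>
    simp only [Pi.add_apply, Pi.single_apply] <;> grind
  by_cases h2 : p = q'
  · refine ⟨Pi.single p' s - Pi.single q 1, ?_, ?_⟩ <;>
    simp only [Pi.sub_apply, Pi.single_apply] <;> grind
  by_cases h3 : q = p'
  · refine ⟨Pi.single p s - Pi.single q' 1, ?_, ?_⟩ <;>
    simp only [Pi.sub_apply, Pi.single_apply] <;> grind
  · refine ⟨Pi.single p s + Pi.single q 1, ?_, ?_⟩ <;>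
    simp only [Pi.add_apply, Pi.single_apply] <;> grind

theorem exists_map_mul_eq_mul_map (hr0 : r ≠ 0) (hr1 : r ≠ 1) (hrn : r ≠ -1) (hs : s ≠ 0)
    {b : K} (hb : b ≠ 0) (c : K) :
    ∃ g : K → L, g 0 = 0 ∧ g b ≠ 0 ∧ g (r * b) = s * g b ∧ g (r * c) = s * g c := by
  classical
  suffices hone : ∀ c, ∃ g : K → L, g 0 = 0 ∧ g 1 = 1 ∧ g r = s ∧ g (r * c) = s * g c by
    obtain ⟨g, h0, h1, hr, hc⟩ := hone (c / b)
    refine ⟨fun z => g (z / b), ?_, ?_, ?_, ?_⟩ <;> simp_all [mul_div_assoc]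
  intro c
  by_cases h1 : c = r
  · refine ⟨Pi.single 1 1 + Pi.single r s + Pi.single (r * r) (s * s), ?_⟩
    simp only [Pi.add_apply, Pi.single_apply]
    grind
  by_cases h2 : r * c = 1
  · refine ⟨Pi.single 1 1 + Pi.single r s + Pi.single c s⁻¹, ?_⟩
    simp only [Pi.add_apply, Pi.single_apply]
    grind
  · refine ⟨Pi.single 1 1 + Pi.single r s, ?_⟩
    simp only [Pi.add_apply, Pi.single_apply]
    grind

/-- The linear forms `y 0 - r y 1`, `y 3 - r y 2`, `y 4 - r y 4` on row vectors, for `i = 0, 1, 2`.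
Their pairwise differences are the values of `y` on the last three columns of
`cyclotomicMatrix r`. -/
def gainForm (r : K) (y : Fin 5 → K) (i : Fin 3) : K :=
  y (![0, 3, 4] i) - r * y (![1, 2, 4] i)

theorem exists_gainForm_comp_eq_of_forall_eq (hr0 : r ≠ 0) (hr1 : r ≠ 1) (hrn : r ≠ -1)
    (hs : s ≠ 0) {y : Fin 5 → K} (hy : y ≠ 0) (hall : ∀ i, gainForm r y i = gainForm r y 2) :
    ∃ g : K → L, (∃ i, g (y i) ≠ g 0) ∧ ∀ i, gainForm s (g ∘ y) i = gainForm s (g ∘ y) 2 := by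
  classical
  have h0 : y 0 - y 4 = r * (y 1 - y 4) := by
    have h : y 0 - r * y 1 = y 4 - r * y 4 := hall 0
    linear_combination h
  have h3 : y 3 - y 4 = r * (y 2 - y 4) := by
    have h : y 3 - r * y 2 = y 4 - r * y 4 := hall 1
    linear_combination h
  have hshift {g : K → L} (hg : g 0 = 0) (hi : ∃ i, g (y i - y 4) ≠ 0)
      (hg1 : g (r * (y 1 - y 4)) = s * g (y 1 - y 4))
      (hg2 : g (r * (y 2 - y 4)) = s * g (y 2 - y 4)) :
      ∃ g : K → L, (∃ i, g (y i) ≠ g 0) ∧ ∀ i, gainForm s (g ∘ y) i = gainForm s (g ∘ y) 2 := by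
    refine ⟨fun z => g (z - y 4), ?_, ?_⟩
    · obtain ⟨i, hi⟩ := hi
      by_cases h4 : g (0 - y 4) = 0
      · exact ⟨i, by simpa only [h4] using hi⟩
      · exact ⟨4, by simpa only [sub_self, hg] using Ne.symm h4⟩
    · simp [Fin.forall_fin_succ, gainForm, h0, h3, hg, hg1, hg2]
  by_cases h1 : y 1 - y 4 = 0
  · by_cases h2 : y 2 - y 4 = 0
    · have hconst (i) : y i = y 4 := by fin_cases i <;> grind
      have hy4 : y 4 ≠ 0 := fun h => hy (funext fun i => (hconst i).trans h)
      exact ⟨Pi.single (y 4) 1, ⟨4, by simp [hy4.symm]⟩, by simp [gainForm, hconst]⟩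
    · obtain ⟨g, hg, hgi, hg2, hg1⟩ := exists_map_mul_eq_mul_map hr0 hr1 hrn hs h2 (y 1 - y 4)
      exact hshift hg ⟨2, hgi⟩ hg1 hg2
  · obtain ⟨g, hg, hgi, hg1, hg2⟩ := exists_map_mul_eq_mul_map hr0 hr1 hrn hs h1 (y 2 - y 4)
    exact hshift hg ⟨1, hgi⟩ hg1 hg2

theorem exists_gainForm_comp_eq_of_ne (hr0 : r ≠ 0) (hr1 : r ≠ 1) (hrn : r ≠ -1) (hs : s ≠ 0)
    {y : Fin 5 → K} (hy : y ≠ 0) {m : Fin 3} (hm : gainForm r y m ≠ gainForm r y 2) :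
    ∃ g : K → L, (∃ i, g (y i) ≠ g 0) ∧
      ∀ i j, gainForm r y i = gainForm r y j → gainForm s (g ∘ y) i = gainForm s (g ∘ y) j := by
  classical
  by_cases hex : ∃ i j, y (![0, 3, 4] i) ≠ y (![0, 3, 4] j) ∧ gainForm r y i = gainForm r y j
  · obtain ⟨i, j, htail, hij⟩ := hex
    obtain ⟨g, hne, hg⟩ := exists_map_sub_mul_map_eq hr1 hrn hs htail hij
    have hvalue : ∃ k, g (y k) ≠ g 0 := by
      by_contra! h
      exact hne ((h _).trans (h _).symm)
    obtain ⟨l, hl⟩ : ∃ l, gainForm r y l ≠ gainForm r y i := by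
      by_contra! h
      exact hm ((h m).trans (h 2).symm)
    have hcases (k : Fin 3) : k = i ∨ k = j ∨ k = l := by
      have hji : j ≠ i := by rintro rfl; exact htail rfl
      have hli : l ≠ i := by rintro rfl; exact hl rfl
      have hlj : l ≠ j := by rintro rfl; exact hl hij.symm
      omega
    have hg' : gainForm s (g ∘ y) i = gainForm s (g ∘ y) j := hg
    refine ⟨g, hvalue, fun k k' hkk' => ?_⟩
    rcases hcases k with rfl | rfl | rfl <;> rcases hcases k' with rfl | rfl | rfl <;> grind
  · push Not at hex
    obtain ⟨i, hi : y i ≠ 0⟩ := Function.ne_iff.mp hy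
    refine ⟨Pi.single (y i) 1, ⟨i, by simp [hi.symm]⟩, fun j k hjk => ?_⟩
    have htail : y (![0, 3, 4] j) = y (![0, 3, 4] k) := by
      by_contra h
      exact hex j k h hjk
    have hhead : y (![1, 2, 4] j) = y (![1, 2, 4] k) :=
      mul_left_cancel₀ hr0 (by simp only [gainForm] at hjk; linear_combination htail - hjk)
    simp only [gainForm, Function.comp_apply, htail, hhead]

end GainForms

section CyclotomicMatrix

variable {K L : Type*} [Field K] [Field L]

/-- The lift of `[I₅ | D₅ | P₀]` to an arbitrary field, with `r` in the role of `α`: the identity,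
the signed incidence matrix of `K₅`, and three further columns which at `r = α` are those of `P₀`
up to scalars. -/
def cyclotomicMatrix (r : K) : Matrix (Fin 5) (Fin 18) K :=
  !![1, 0, 0, 0, 0,  1,  1,  1,  1,  0,  0,  0,  0,  0,  0,  1,  1,     0;
     0, 1, 0, 0, 0, -1,  0,  0,  0,  1,  1,  1,  0,  0,  0, -r, -r,     0;
     0, 0, 1, 0, 0,  0, -1,  0,  0, -1,  0,  0,  1,  1,  0,  r,  0,     -r;
     0, 0, 0, 1, 0,  0,  0, -1,  0,  0, -1,  0, -1,  0,  1, -1,  0,     1;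
     0, 0, 0, 0, 1,  0,  0,  0, -1,  0,  0, -1,  0, -1, -1,  0,  r - 1, r - 1]

theorem vecMul_cyclotomicMatrix (r : K) (y : Fin 5 → K) :
    y ᵥ* cyclotomicMatrix r =
      ![y 0, y 1, y 2, y 3, y 4, y 0 - y 1, y 0 - y 2, y 0 - y 3, y 0 - y 4, y 1 - y 2, y 1 - y 3,
        y 1 - y 4, y 2 - y 3, y 2 - y 4, y 3 - y 4, gainForm r y 0 - gainForm r y 1,
        gainForm r y 0 - gainForm r y 2, gainForm r y 1 - gainForm r y 2] := by
  funext j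
  fin_cases j <;>
    simp [cyclotomicMatrix, gainForm, vecMul, dotProduct, Fin.sum_univ_five] <;> ring

theorem exists_vecMul_cyclotomicMatrix_eq_zero {r : K} {s : L} (hr0 : r ≠ 0) (hr1 : r ≠ 1)
    (hrn : r ≠ -1) (hs : s ≠ 0) {y : Fin 5 → K} (hy : y ≠ 0) :
    ∃ z : Fin 5 → L, z ≠ 0 ∧
      ∀ j, (y ᵥ* cyclotomicMatrix r) j = 0 → (z ᵥ* cyclotomicMatrix s) j = 0 := by
  obtain ⟨g, ⟨i, hi⟩, hg⟩ : ∃ g : K → L, (∃ i, g (y i) ≠ g 0) ∧ ∀ i j,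
      gainForm r y i = gainForm r y j → gainForm s (g ∘ y) i = gainForm s (g ∘ y) j := by
    by_cases hall : ∀ i, gainForm r y i = gainForm r y 2
    · obtain ⟨g, hvalue, hg⟩ := exists_gainForm_comp_eq_of_forall_eq hr0 hr1 hrn hs hy hall
      exact ⟨g, hvalue, fun i j _ => (hg i).trans (hg j).symm⟩
    · obtain ⟨m, hm⟩ := not_forall.mp hall
      exact exists_gainForm_comp_eq_of_ne hr0 hr1 hrn hs hy hm
  let z : Fin 5 → L := fun i => g (y i) - g 0
  have hz (i : Fin 3) : gainForm s z i = gainForm s (g ∘ y) i - (1 - s) * g 0 := by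
    simp only [z, gainForm, Function.comp_apply]
    ring
  have hzero {i} (h : y i = 0) : z i = 0 := by simp only [z, h, sub_self]
  have hedge {i j} (h : y i - y j = 0) : z i - z j = 0 := by
    simp only [z, sub_eq_zero.mp h, sub_self]
  have hform {i j} (h : gainForm r y i - gainForm r y j = 0) :
      gainForm s z i - gainForm s z j = 0 := by
    rw [hz, hz, hg i j (sub_eq_zero.mp h), sub_self]
  refine ⟨z, fun h => hi (sub_eq_zero.mp (congrFun h i)), fun j => ?_⟩
  rw [vecMul_cyclotomicMatrix, vecMul_cyclotomicMatrix]
  fin_cases j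
  iterate 5 exact hzero
  iterate 10 exact hedge
  iterate 3 exact hform

theorem linearIndepOn_cyclotomicMatrix_of_linearIndepOn {r : K} {s : L} (hr0 : r ≠ 0)
    (hs0 : s ≠ 0) (hs1 : s ≠ 1) (hsn : s ≠ -1) {S : Set (Fin 18)}
    (hS : LinearIndepOn K (cyclotomicMatrix r).col S) :
    LinearIndepOn L (cyclotomicMatrix s).col S := by
  have hrange : span K (Set.range (cyclotomicMatrix r).col) = ⊤ := by
    rw [← Set.image_univ, span_col_image_eq_top_iff]
    intro y hy
    rw [vecMul_cyclotomicMatrix] at hy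
    funext i
    fin_cases i
    exacts [hy 0 trivial, hy 1 trivial, hy 2 trivial, hy 3 trivial, hy 4 trivial]
  refine linearIndepOn_of_forall_span_image_eq_top (by simp) hrange (fun T hT => ?_) hS
  rw [span_col_image_eq_top_iff] at hT ⊢
  intro y hy
  by_contra hy0
  obtain ⟨z, hz0, hz⟩ := exists_vecMul_cyclotomicMatrix_eq_zero hs0 hs1 hsn hr0 hy0
  exact hz0 (hT z fun j hj => hz j (hy j hj))

theorem linearIndepOn_cyclotomicMatrix_iff {r : K} {s : L} (hr0 : r ≠ 0) (hr1 : r ≠ 1)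
    (hrn : r ≠ -1) (hs0 : s ≠ 0) (hs1 : s ≠ 1) (hsn : s ≠ -1) (S : Set (Fin 18)) :
    LinearIndepOn K (cyclotomicMatrix r).col S ↔ LinearIndepOn L (cyclotomicMatrix s).col S :=
  ⟨linearIndepOn_cyclotomicMatrix_of_linearIndepOn hr0 hs0 hs1 hsn,
    linearIndepOn_cyclotomicMatrix_of_linearIndepOn hs0 hr0 hr1 hrn⟩

theorem pairwise_linearIndepOn_cyclotomicMatrix {r : K} (hr0 : r ≠ 0) (hr1 : r ≠ 1)
    (hrn : r ≠ -1) : ({0, 2, 6, 15, 16} : Set (Fin 18)).Pairwise fun i j =>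
      LinearIndepOn K (cyclotomicMatrix r).col ({1, 3, 13} ∪ {i, j}) := by
  -- A vector killing columns 1, 3, 13 has the form `(a, 0, b, 0, b)`; on the other five columns it
  -- takes the values `a`, `b`, `a - b`, `a + r b`, `a - (1 - r) b`, no two of them proportional.
  intro i hi j hj hij
  refine linearIndepOn_of_span_image_eq_top ?_ ?_
  · rw [finrank_fin_fun]
    rcases hi with rfl | rfl | rfl | rfl | rfl <;> rcases hj with rfl | rfl | rfl | rfl | rfl <;>
      first | contradiction | rfl
  rw [span_col_image_eq_top_iff]
  intro y hy
  rw [vecMul_cyclotomicMatrix] at hy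
  have h1 : y 1 = 0 := hy 1 (by simp)
  have h3 : y 3 = 0 := hy 3 (by simp)
  have h24 : y 2 = y 4 := sub_eq_zero.mp (hy 13 (by simp))
  have hyi := hy i (by simp)
  have hyj := hy j (by simp)
  have h02 : y 0 = 0 ∧ y 2 = 0 := by
    rcases hi with rfl | rfl | rfl | rfl | rfl <;> rcases hj with rfl | rfl | rfl | rfl | rfl <;>
      simp [gainForm] at hyi hyj <;> grind
  funext i
  fin_cases i
  exacts [h02.1, h1, h02.2, h3, h24.symm.trans h02.2]

theorem four_le_card_of_forall_linearIndepOn_iff {F V : Type*} [Field F] [Finite F]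
    [AddCommGroup V] [Module F V] {v : Fin 18 → V} {r : K} (hr0 : r ≠ 0) (hr1 : r ≠ 1)
    (hrn : r ≠ -1)
    (h : ∀ S, LinearIndepOn F v S ↔ LinearIndepOn K (cyclotomicMatrix r).col S) :
    4 ≤ Nat.card F := by
  have hDC : Disjoint ({1, 3, 13} : Set (Fin 18)) {0, 2, 6, 15, 16} := by simp
  have hcard : ({0, 2, 6, 15, 16} : Set (Fin 18)).ncard = 5 := by
    rw [Set.ncard_eq_toFinset_card']
    rfl
  suffices hline : ({0, 2, 6, 15, 16} : Set (Fin 18)).ncard ≤ Nat.card F + 1 by omega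
  refine ncard_le_card_add_one_of_line_minor (v := v) hDC ⟨0, by simp, 2, by simp, by simp⟩
    (fun i hi j hj hij => (h _).mpr (pairwise_linearIndepOn_cyclotomicMatrix hr0 hr1 hrn hi hj hij))
    fun i hi j hj k hk hij hkij hind => ?_
  have hrank := ((h _).mp hind).encard_le_toENat_rank
  have hsub : {k, i, j} ⊆ ({0, 2, 6, 15, 16} : Set (Fin 18)) :=
    Set.insert_subset hk (Set.pair_subset hi hj)
  rw [Set.encard_union_eq (hDC.mono_right hsub), Set.encard_insert_of_notMem hkij,
    Set.encard_pair hij, Set.encard_insert_of_notMem (by simp), Set.encard_pair (by simp)] at hrank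
  norm_num at hrank

end CyclotomicMatrix

theorem linearIndepOn_matI5D5P0_iff {α : GaloisField 2 2} (hα : α ^ 2 = α + 1) (S : Set (Fin 18)) :
    LinearIndepOn (GaloisField 2 2) (matI5D5P0 α).col S ↔
      LinearIndepOn (GaloisField 2 2) (cyclotomicMatrix α).col S := by
  have hα0 : α ≠ 0 := by rintro rfl; simp at hα
  let c : Fin 18 → (GaloisField 2 2)ˣ := fun j => if j = 16 ∨ j = 17 then Units.mk0 α hα0 else 1
  have : (2 : GaloisField 2 2) = 0 := CharTwo.two_eq_zero
  have hcol : (matI5D5P0 α).col = fun j => c j • (cyclotomicMatrix α).col j := by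
    funext j i
    fin_cases j <;> fin_cases i <;> simp [c, matI5D5P0, cyclotomicMatrix, Units.smul_def] <;> grind
  rw [hcol]
  exact LinearIndependent.units_smul_iff (fun j : S => (cyclotomicMatrix α).col j) fun j => c j

/-- A field `F` realizes the column matroid of `[I₅ | D₅ | P₀]` iff `F` is infinite or
has at least 4 elements (the universal partial field of this matroid is the
2-cyclotomic partial field `𝕂₂`). -/
theorem stmt_15 (α : GaloisField 2 2) (hα : α ^ 2 = α + 1) (F : Type*) [Field F] :
    RealizesColumnMatroid (matI5D5P0 α) F ↔ (Infinite F ∨ 4 ≤ Nat.card F) := by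
  have hα0 : α ≠ 0 := by rintro rfl; simp at hα
  have hα1 : α ≠ 1 := by rintro rfl; simp [CharTwo.add_self_eq_zero] at hα
  have hαn : α ≠ -1 := by rwa [CharTwo.neg_eq]
  constructor
  · rintro ⟨n, B, hB⟩
    rcases finite_or_infinite F with _ | hF
    · exact .inr (four_le_card_of_forall_linearIndepOn_iff (v := B.col) hα0 hα1 hαn fun S =>
        (hB S).trans (linearIndepOn_matI5D5P0_iff hα S))
    · exact .inl hF
  · intro hF
    obtain ⟨r, hr0, hr1, hrn⟩ := exists_ne_zero_ne_one_ne_neg_one hF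
    exact ⟨5, cyclotomicMatrix r, fun S =>
      (linearIndepOn_cyclotomicMatrix_iff hr0 hr1 hrn hα0 hα1 hαn S).trans
        (linearIndepOn_matI5D5P0_iff hα S).symm⟩
end

section
/- Let P₀ be the 4 × 4 matrix over GF(4) with rows (1,α,1,0), (α,α²,α²,α²), (α,1,α²,α), (1,0,1,1), and let A = [I₄ | D₄ | P₀] be the 4 × 14 matrix over GF(4) obtained by placing the 4 × 4 identity matrix, the matrix D₄, and P₀ side by side. A field F realizes the column matroid of A if and only if F is infinite, has exactly 4 elements, or has at least 7 elements. (The universal partial field of this matroid is the Pappus-template partial field 𝔓𝕋; in particular the matroid is representable over GF(4) and over all fields of size at least 7, but over no other field.) -/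
/-- The matrix `[I₄ | D₄ | P₀]` over `GF(4)`, where `D₄` is the (mod-2) signed incidence
matrix of `K₄` and `P₀` is matrix `XVI` of the paper. -/
noncomputable def matI4D4P0 (α : GaloisField 2 2) :
    Matrix (Fin 4) (Fin 14) (GaloisField 2 2) :=
  !![1, 0, 0, 0,  1, 1, 1, 0, 0, 0,  1, α, 1, 0;
     0, 1, 0, 0,  1, 0, 0, 1, 1, 0,  α, α ^ 2, α ^ 2, α ^ 2;
     0, 0, 1, 0,  0, 1, 0, 1, 0, 1,  α, 1, α ^ 2, α;
     0, 0, 0, 1,  0, 0, 1, 0, 1, 1,  1, 0, 1, 1]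

/-!
Replace the root `α` by an indeterminate `x` and lift the signs, which gives fourteen points with
coordinates in `ℤ[x]`. Each `4 × 4` minor is `0` or a unit times a product of factors among `x`,
`x + 1`, `x - 1`, `x + 2`, `2x + 1`; as all degrees are at most `8`, nine integer evaluations prove
this. So all values of `x` at which these factors do not vanish give the same matroid, and `α` is
such a value over `GF(4)`.

Conversely, a realization can be normalized and projected from its first point to a projective
plane, where collinearities determine all points in turn from a single parameter `y`. Non-collinear
triples force the five factors not to vanish at `y`. A field has such a `y` exactly when it is
infinite, has `4` elements, or has at least `7`.
-/

open Polynomial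

theorem natDegree_det_le {n R : Type*} [Fintype n] [DecidableEq n] [CommRing R]
    {M : Matrix n n R[X]} {d : ℕ} (hM : ∀ i j, (M i j).natDegree ≤ d) :
    M.det.natDegree ≤ Fintype.card n * d := by
  rw [Matrix.det_apply]
  refine natDegree_sum_le_of_forall_le _ _ fun σ _ => (natDegree_smul_le _ _).trans ?_
  refine (natDegree_prod_le _ _).trans ?_
  exact Finset.sum_le_card_nsmul _ _ _ fun i _ => hM _ _

theorem det_of_vecCons_single {R : Type*} [CommRing R] {n : ℕ} (u : Fin n → Fin (n + 1) → R) :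
    (Matrix.of (Matrix.vecCons (Pi.single 0 1) u)).det =
      (Matrix.of fun i => Matrix.vecTail (u i)).det := by
  rw [Matrix.det_succ_row_zero, Fintype.sum_eq_single 0]
  · simp only [Fin.val_zero, pow_zero, one_mul, Matrix.of_apply, Matrix.cons_val_zero,
      Pi.single_eq_same]
    rfl
  · intro j hj
    simp [hj]

theorem det_smul_smul {R : Type*} [CommRing R] (a b : R) (u v p : Fin 3 → R) :
    (Matrix.of ![a • u, b • v, p]).det = a * b * (Matrix.of ![u, v, p]).det := by
  simp only [Matrix.det_fin_three, Matrix.of_apply, Matrix.cons_val, Pi.smul_apply, smul_eq_mul]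
  ring

theorem vecTail_single_succ {R : Type*} [Zero R] [One R] {n : ℕ} (k : Fin n) :
    Matrix.vecTail (Pi.single k.succ 1) = (Pi.single k 1 : Fin n → R) := by
  ext l
  simp [Matrix.vecTail, Pi.single_apply]

/-- The determinant of the integer matrix with rows `u`, `v`, `w`, `z`, by Laplace expansion along
the first two rows: a form that the kernel evaluates fast. -/
def laplaceDet (u v w z : Fin 4 → ℤ) : ℤ :=
  let p i j := u i * v j - u j * v i
  let q i j := w i * z j - w j * z i
  p 0 1 * q 2 3 - p 0 2 * q 1 3 + p 0 3 * q 1 2 + p 1 2 * q 0 3 - p 1 3 * q 0 2 + p 2 3 * q 0 1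

theorem laplaceDet_eq_det (M : Matrix (Fin 4) (Fin 4) ℤ) :
    laplaceDet (M 0) (M 1) (M 2) (M 3) = M.det := by
  simp only [laplaceDet, Matrix.det_succ_row_zero (n := 3), Fin.sum_univ_four, Matrix.det_fin_three,
    Matrix.submatrix_apply, Fin.succAbove, Fin.reduceSucc, Fin.reduceCastSucc, Fin.reduceLT,
    ↓reduceIte, Fin.coe_ofNat_eq_mod]
  ring

theorem linearIndependent_iff_det_ne_zero {n K : Type*} [Fintype n] [DecidableEq n] [Field K]
    {v : n → n → K} : LinearIndependent K v ↔ (Matrix.of v).det ≠ 0 := by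
  rw [← isUnit_iff_ne_zero, ← Matrix.isUnit_iff_isUnit_det,
    ← Matrix.linearIndependent_rows_iff_isUnit]
  rfl

theorem linearIndepOn_of_det_ne_zero {ι K F : Type*} [LinearOrder ι] [Field K] [Field F] {r : ℕ}
    {a : ι → Fin r → K} {b : ι → Fin r → F} (ha : Submodule.span K (Set.range a) = ⊤)
    (h : ∀ f : Fin r ↪o ι, (Matrix.of (a ∘ f)).det ≠ 0 → (Matrix.of (b ∘ f)).det ≠ 0)
    {S : Set ι} (hS : LinearIndepOn K a S) : LinearIndepOn F b S := by
  obtain ⟨T, -, hST, hspan, hT⟩ := exists_linearIndepOn_extension hS (Set.subset_univ S)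
  have hT_top : Submodule.span K (Set.range fun j : T => a j) = ⊤ := by
    rw [eq_top_iff, ← ha, Submodule.span_le, ← Set.image_univ, ← Set.image_eq_range]
    exact hspan
  have : Fintype T := @Fintype.ofFinite _ hT.linearIndependent.finite
  have hcard : T.toFinset.card = r := by
    rw [Set.toFinset_card, linearIndependent_iff_card_eq_finrank_span.1 hT.linearIndependent,
      Set.finrank, hT_top, finrank_top, Module.finrank_fin_fun]
  let f := T.toFinset.orderEmbOfFin hcard
  have hf : Set.range f = T := by simp [f]
  rw [← hf, linearIndepOn_range_iff f.injective, linearIndependent_iff_det_ne_zero] at hT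
  have hb := h f hT
  rw [← linearIndependent_iff_det_ne_zero, ← linearIndepOn_range_iff f.injective, hf] at hb
  exact hb.mono hST

section

variable {ι K F W V : Type*} [Field K] [Field F] [AddCommGroup W] [Module K W] [AddCommGroup V]
  [Module F V] {a : ι → W} {b : ι → V}

theorem linearIndependent_comp_iff_of_linearIndepOn_iff
    (h : ∀ S, LinearIndepOn F b S ↔ LinearIndepOn K a S) {κ : Type*} (f : κ → ι) :
    LinearIndependent F (b ∘ f) ↔ LinearIndependent K (a ∘ f) := by
  by_cases hf : Function.Injective f
  · rw [← linearIndepOn_range_iff hf, h, linearIndepOn_range_iff hf]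
  · exact iff_of_false (fun hb => hf hb.injective.of_comp) (fun ha => hf ha.injective.of_comp)

theorem exists_coordinates_of_linearIndepOn_iff
    (h : ∀ S, LinearIndepOn F b S ↔ LinearIndepOn K a S) {κ : Type*} [Finite κ] [DecidableEq κ]
    {e : κ → ι} (he : LinearIndependent K (a ∘ e))
    (hspan : ∀ j, a j ∈ Submodule.span K (Set.range (a ∘ e))) :
    ∃ c : ι → κ → F, (∀ k, c (e k) = Pi.single k 1) ∧
      ∀ S, LinearIndepOn F c S ↔ LinearIndepOn K a S := by
  cases nonempty_fintype κ
  have hbe : LinearIndependent F (b ∘ e) :=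
    (linearIndependent_comp_iff_of_linearIndepOn_iff h e).2 he
  have hinj : Function.Injective (Fintype.linearCombination F (b ∘ e)) :=
    hbe.fintypeLinearCombination_injective
  have hmem (j : ι) : b j ∈ LinearMap.range (Fintype.linearCombination F (b ∘ e)) := by
    have heInj := he.injective.of_comp
    have hj := hspan j
    rw [Set.range_comp, ((linearIndepOn_range_iff heInj a).2 he).mem_span_iff, ← h] at hj
    rwa [Fintype.range_linearCombination, Set.range_comp,
      ((linearIndepOn_range_iff heInj b).2 hbe).mem_span_iff]
  choose c hc using hmem
  refine ⟨c, fun k => hinj ?_, fun S => ?_⟩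
  · simp [hc, Fintype.linearCombination_apply_single]
  · rw [← h, ← funext hc]
    exact (LinearMap.linearIndepOn_iff_of_injOn _ hinj.injOn).symm

end

theorem det_comp_eq_zero_iff_of_linearIndepOn_iff {ι n K F : Type*} [Fintype n] [DecidableEq n]
    [Field K] [Field F] {a : ι → n → K} {b : ι → n → F}
    (h : ∀ S, LinearIndepOn F b S ↔ LinearIndepOn K a S) (f : n → ι) :
    (Matrix.of (b ∘ f)).det = 0 ↔ (Matrix.of (a ∘ f)).det = 0 := by
  rw [← not_iff_not]
  exact linearIndependent_iff_det_ne_zero.symm.trans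
    ((linearIndependent_comp_iff_of_linearIndepOn_iff h f).trans linearIndependent_iff_det_ne_zero)

theorem mem_span_singleton_of_eq_mul {R : Type*} [Semiring R] {p q : Fin 3 → R} (c : R)
    (h0 : p 0 = c * q 0) (h1 : p 1 = c * q 1) (h2 : p 2 = c * q 2) : p ∈ Submodule.span R {q} :=
  Submodule.mem_span_singleton.2 ⟨c, by ext k; fin_cases k <;> simp [*]⟩

theorem lt_enatCard_of_infinite_or_lt_natCard {β : Type*} {n : ℕ}
    (h : Infinite β ∨ n < Nat.card β) : n < ENat.card β := by
  rcases finite_or_infinite β with hβ | hβ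
  · rw [ENat.card_eq_coe_natCard]
    exact_mod_cast h.resolve_left (not_infinite_iff_finite.2 hβ)
  · simp

/-! ### The generic configuration -/

/-- The columns of a lift of `[I₄ | D₄ | P₀]` with an arbitrary parameter `x` in place of `α`; the
signs are chosen so that each relation between columns that holds over `GF(4)` persists. -/
def pappusPoint {R : Type*} [CommRing R] (x : R) : Fin 14 → Fin 4 → R :=
  ![![1, 0, 0, 0], ![0, 1, 0, 0], ![0, 0, 1, 0], ![0, 0, 0, 1],
    ![1, -1, 0, 0], ![1, 0, -1, 0], ![1, 0, 0, -1],
    ![0, 1, -1, 0], ![0, 1, 0, -1], ![0, 0, 1, -1],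
    ![1, x, -x, -1], ![x, x ^ 2, -(x * (x + 1)), 0],
    ![1, x + 1, -(x + 1), -1], ![0, x + 1, -x, -1]]

/-- Admissible values of the parameter of `pappusPoint`: those at which no irreducible factor of a
nonzero `4 × 4` minor of the generic configuration vanishes. -/
structure IsPappusParameter {R : Type*} [CommRing R] (x : R) : Prop where
  ne_zero : x ≠ 0
  add_one_ne_zero : x + 1 ≠ 0
  sub_one_ne_zero : x - 1 ≠ 0
  add_two_ne_zero : x + 2 ≠ 0
  two_mul_add_one_ne_zero : 2 * x + 1 ≠ 0

/-- The values, up to sign, of the nonzero `4 × 4` minors of the generic `pappusPoint x`. -/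
def pappusUnit {R : Type*} [CommRing R] (x : R) : Fin 8 → R :=
  ![1, x, x + 1, x * (x + 1), x ^ 2, x + 2, x - 1, x * (2 * x + 1)]

theorem map_pappusPoint {R S : Type*} [CommRing R] [CommRing S] (φ : R →+* S) (x : R) (j : Fin 14)
    (k : Fin 4) : φ (pappusPoint x j k) = pappusPoint (φ x) j k := by
  fin_cases j <;> fin_cases k <;> simp [pappusPoint]

theorem map_pappusUnit {R S : Type*} [CommRing R] [CommRing S] (φ : R →+* S) (x : R) (i : Fin 8) :
    φ (pappusUnit x i) = pappusUnit (φ x) i := by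
  fin_cases i <;> simp [pappusUnit, map_ofNat]

theorem map_det_pappusPoint {R S : Type*} [CommRing R] [CommRing S] (φ : R →+* S) (x : R)
    (f : Fin 4 → Fin 14) :
    φ (Matrix.of (pappusPoint x ∘ f)).det = (Matrix.of (pappusPoint (φ x) ∘ f)).det := by
  rw [RingHom.map_det]
  congr 1
  ext i k
  exact map_pappusPoint φ x (f i) k

theorem IsPappusParameter.pappusUnit_ne_zero {R : Type*} [CommRing R] [IsDomain R] {x : R}
    (hx : IsPappusParameter x) (i : Fin 8) : pappusUnit x i ≠ 0 := by
  obtain ⟨h0, h1, h2, h3, h4⟩ := hx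
  fin_cases i <;> simp [pappusUnit, *]

set_option maxRecDepth 10000 in
theorem exists_laplaceDet_pappusPoint_eq : ∀ i j : Fin 14, i < j → ∀ k, j < k → ∀ l, k < l →
    ∃ (s : SignType) (m : Fin 8), ∀ t : Fin 9,
      laplaceDet (pappusPoint (t : ℤ) i) (pappusPoint (t : ℤ) j) (pappusPoint (t : ℤ) k)
        (pappusPoint (t : ℤ) l) = s * pappusUnit (t : ℤ) m := by
  decide +kernel

theorem natDegree_pappusPoint_X_le (j : Fin 14) (k : Fin 4) :
    (pappusPoint (X : ℤ[X]) j k).natDegree ≤ 2 := by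
  fin_cases j <;> fin_cases k <;>
    simp only [pappusPoint, Fin.reduceFinMk, Fin.isValue, Matrix.cons_val] <;> compute_degree!

theorem natDegree_pappusUnit_X_le (i : Fin 8) : (pappusUnit (X : ℤ[X]) i).natDegree ≤ 2 := by
  fin_cases i <;>
    simp only [pappusUnit, Fin.reduceFinMk, Matrix.cons_val] <;> compute_degree!

theorem exists_det_pappusPoint_X_eq (f : Fin 4 ↪o Fin 14) :
    ∃ (s : SignType) (i : Fin 8),
      (Matrix.of (pappusPoint (X : ℤ[X]) ∘ f)).det = (s : ℤ) • pappusUnit X i := by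
  obtain ⟨s, i, h⟩ := exists_laplaceDet_pappusPoint_eq (f 0) (f 1) (f.strictMono (by decide)) (f 2)
    (f.strictMono (by decide)) (f 3) (f.strictMono (by decide))
  have hdet : (Matrix.of (pappusPoint (X : ℤ[X]) ∘ f)).det.natDegree ≤ 8 :=
    natDegree_det_le fun i k => natDegree_pappusPoint_X_le (f i) k
  have hunit : ((s : ℤ) • pappusUnit (X : ℤ[X]) i).natDegree ≤ 2 :=
    (natDegree_smul_le _ _).trans (natDegree_pappusUnit_X_le i)
  have hinj : Set.InjOn (fun t : Fin 9 => (t : ℤ)) (Finset.univ : Finset (Fin 9)) :=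
    (Nat.cast_injective.comp Fin.val_injective).injOn
  refine ⟨s, i, eq_of_degrees_lt_of_eval_index_eq _ hinj
    ((degree_le_of_natDegree_le hdet).trans_lt (by norm_cast))
    ((degree_le_of_natDegree_le hunit).trans_lt (by norm_cast)) fun t _ => ?_⟩
  have hdet_eval := map_det_pappusPoint (evalRingHom (t : ℤ)) X f
  have hunit_eval := map_pappusUnit (evalRingHom (t : ℤ)) X i
  simp only [coe_evalRingHom, eval_X] at hdet_eval hunit_eval
  rw [hdet_eval, eval_smul, hunit_eval, ← laplaceDet_eq_det]
  exact h t

theorem det_pappusPoint_eq_zero_iff {R : Type*} [CommRing R] [IsDomain R] {x : R}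
    (hx : IsPappusParameter x) (f : Fin 4 ↪o Fin 14) :
    (Matrix.of (pappusPoint x ∘ f)).det = 0 ↔
      (Matrix.of (pappusPoint (X : ℤ[X]) ∘ f)).det = 0 := by
  have hmap := map_det_pappusPoint (aeval (R := ℤ) x).toRingHom X f
  simp only [AlgHom.toRingHom_eq_coe, RingHom.coe_coe, aeval_X] at hmap
  rw [← hmap]
  refine ⟨fun h => ?_, fun h => by rw [h, map_zero]⟩
  obtain ⟨s, i, hs⟩ := exists_det_pappusPoint_X_eq f
  have hunit := map_pappusUnit (aeval (R := ℤ) x).toRingHom X i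
  simp only [AlgHom.toRingHom_eq_coe, RingHom.coe_coe, aeval_X] at hunit
  rw [hs, map_zsmul, hunit] at h
  rw [hs]
  have := hx.pappusUnit_ne_zero i
  cases s <;> simp_all

theorem span_range_pappusPoint {K : Type*} [Field K] (x : K) :
    Submodule.span K (Set.range (pappusPoint x)) = ⊤ := by
  rw [eq_top_iff, ← (Pi.basisFun K (Fin 4)).span_eq]
  refine Submodule.span_mono ?_
  rintro _ ⟨k, rfl⟩
  refine ⟨k.castLE (by decide), ?_⟩
  ext l
  fin_cases k <;> fin_cases l <;> simp [pappusPoint]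

theorem linearIndepOn_pappusPoint_iff {K L : Type*} [Field K] [Field L] {x : K} {y : L}
    (hx : IsPappusParameter x) (hy : IsPappusParameter y) {S : Set (Fin 14)} :
    LinearIndepOn L (pappusPoint y) S ↔ LinearIndepOn K (pappusPoint x) S := by
  have h (f : Fin 4 ↪o Fin 14) : (Matrix.of (pappusPoint x ∘ f)).det ≠ 0 ↔
      (Matrix.of (pappusPoint y ∘ f)).det ≠ 0 :=
    not_congr ((det_pappusPoint_eq_zero_iff hx f).trans (det_pappusPoint_eq_zero_iff hy f).symm)
  exact ⟨linearIndepOn_of_det_ne_zero (span_range_pappusPoint y) fun f => (h f).2,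
    linearIndepOn_of_det_ne_zero (span_range_pappusPoint x) fun f => (h f).1⟩

theorem matI4D4P0_eq_transpose_pappusPoint {α : GaloisField 2 2} (hα : α ^ 2 = α + 1) :
    matI4D4P0 α = (Matrix.of (pappusPoint α)).transpose := by
  have h : α * (α + 1) = 1 := by
    linear_combination hα + CharTwo.add_self_eq_zero α
  ext k j
  fin_cases k <;> fin_cases j <;>
    simp [matI4D4P0, pappusPoint, CharTwo.neg_eq, hα, h]

theorem isPappusParameter_of_sq_eq_add_one {K : Type*} [Field K] [CharP K 2] {a : K}
    (ha : a ^ 2 = a + 1) : IsPappusParameter a := by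
  have h2 : (2 : K) = 0 := CharTwo.two_eq_zero
  have h0 : a ≠ 0 := by rintro rfl; simp at ha
  have h1 : a + 1 ≠ 0 := by rw [← ha]; exact pow_ne_zero 2 h0
  exact ⟨h0, h1, by rwa [CharTwo.sub_eq_add], by simpa [h2], by simp [h2]⟩

/-! ### Rigidity of the projection to a plane -/

/-- The determinant of the coordinate vectors of three points of a projective plane: it vanishes
exactly when the points are collinear. -/
def bracket {ι R : Type*} [CommRing R] (v : ι → Fin 3 → R) (i j k : ι) : R :=
  (Matrix.of ![v i, v j, v k]).det

/-- Two plane configurations with the same index set have the same collinear triples. -/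
def SameCollinearities {ι R S : Type*} [CommRing R] [CommRing S] (v : ι → Fin 3 → R)
    (w : ι → Fin 3 → S) : Prop :=
  ∀ i j k, bracket v i j k = 0 ↔ bracket w i j k = 0

theorem bracket_eq {ι R : Type*} [CommRing R] (v : ι → Fin 3 → R) (i j k : ι) :
    bracket v i j k = v i 0 * v j 1 * v k 2 - v i 0 * v j 2 * v k 1 - v i 1 * v j 0 * v k 2 +
      v i 1 * v j 2 * v k 0 + v i 2 * v j 0 * v k 1 - v i 2 * v j 1 * v k 0 :=
  Matrix.det_fin_three _

theorem bracket_mul {ι R : Type*} [CommRing R] (d : Fin 3 → R) (v : ι → Fin 3 → R) (i j k : ι) :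
    bracket (fun l => d * v l) i j k = d 0 * d 1 * d 2 * bracket v i j k := by
  simp only [bracket_eq, Pi.mul_apply]
  ring

theorem bracket_vecTail {ι R : Type*} [CommRing R] {p : ι → Fin 4 → R} {o : ι}
    (ho : p o = Pi.single 0 1) (i j k : ι) :
    bracket (fun l => Matrix.vecTail (p l)) i j k = (Matrix.of (p ∘ ![o, i, j, k])).det := by
  have hp : p ∘ ![o, i, j, k] = Matrix.vecCons (Pi.single 0 1) (p ∘ ![i, j, k]) := by
    ext l : 1
    refine Fin.cases ho (fun l => rfl) l
  rw [hp, det_of_vecCons_single]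
  refine congrArg Matrix.det ?_
  ext l m
  fin_cases l <;> rfl

section

variable {ι F K : Type*} [Field F] [Field K] {v w : ι → Fin 3 → F}

theorem SameCollinearities.det_eq_zero_iff_of_mem_span {u : ι → Fin 3 → K} {i j k m : ι}
    (h : SameCollinearities v u) (hi : v i ∈ Submodule.span F {w i})
    (hj : v j ∈ Submodule.span F {w j}) (hm : bracket u i j m ≠ 0) :
    (Matrix.of ![w i, w j, v k]).det = 0 ↔ bracket u i j k = 0 := by
  obtain ⟨a, ha⟩ := Submodule.mem_span_singleton.1 hi
  obtain ⟨b, hb⟩ := Submodule.mem_span_singleton.1 hj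
  rw [ne_eq, ← h i j m, bracket, ← ha, ← hb, det_smul_smul] at hm
  rw [← h i j k, bracket, ← ha, ← hb, det_smul_smul]
  exact (mul_eq_zero_iff_left (left_ne_zero_of_mul hm)).symm

theorem bracket_ne_zero_of_mem_span {i j k : ι} (h : bracket v i j k ≠ 0)
    (hi : v i ∈ Submodule.span F {w i}) (hj : v j ∈ Submodule.span F {w j})
    (hk : v k ∈ Submodule.span F {w k}) : bracket w i j k ≠ 0 := by
  obtain ⟨a, ha⟩ := Submodule.mem_span_singleton.1 hi
  obtain ⟨b, hb⟩ := Submodule.mem_span_singleton.1 hj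
  obtain ⟨c, hc⟩ := Submodule.mem_span_singleton.1 hk
  have : bracket v i j k = a * b * c * bracket w i j k := by
    simp only [bracket_eq, ← ha, ← hb, ← hc, Pi.smul_apply, smul_eq_mul]
    ring
  exact right_ne_zero_of_mul (this ▸ h)

theorem SameCollinearities.mul {u : ι → Fin 3 → K} (h : SameCollinearities v u) {d : Fin 3 → F}
    (hd : ∀ l, d l ≠ 0) : SameCollinearities (fun j => d * v j) u := fun i j k => by
  rw [bracket_mul, mul_eq_zero_iff_left (by simp [hd]), h]

end

/-- The projection of the point `pappusPoint x j` from the first unit vector `pappusPoint x 0`. -/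
def planePoint {R : Type*} [CommRing R] (x : R) (j : Fin 14) : Fin 3 → R :=
  Matrix.vecTail (pappusPoint x j)

theorem planePoint_eq {R : Type*} [CommRing R] (x : R) : planePoint x =
    ![![0, 0, 0], ![1, 0, 0], ![0, 1, 0], ![0, 0, 1], ![-1, 0, 0], ![0, -1, 0], ![0, 0, -1],
      ![1, -1, 0], ![1, 0, -1], ![0, 1, -1], ![x, -x, -1], ![x ^ 2, -(x * (x + 1)), 0],
      ![x + 1, -(x + 1), -1], ![x + 1, -x, -1]] := by
  ext j k
  fin_cases j <;> rfl

section

variable {F : Type*} [Field F] {y : F} {p : Fin 3 → F}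

theorem mem_span_planePoint_nine
    (h56 : (Matrix.of ![planePoint y 5, planePoint y 6, p]).det = 0)
    (h78 : (Matrix.of ![planePoint y 7, planePoint y 8, p]).det = 0) :
    p ∈ Submodule.span F {planePoint y 9} := by
  simp only [Matrix.det_fin_three, planePoint_eq, Matrix.of_apply, Matrix.cons_val] at h56 h78
  refine mem_span_singleton_of_eq_mul (p 1) ?_ ?_ ?_ <;>
    simp only [planePoint_eq, Matrix.cons_val]
  · linear_combination h56
  · ring
  · linear_combination h78 - h56

theorem mem_span_planePoint_ten (hp : p 2 ≠ 0)
    (h67 : (Matrix.of ![planePoint y 6, planePoint y 7, p]).det = 0) :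
    p ∈ Submodule.span F {planePoint (-p 0 / p 2) 10} := by
  simp only [Matrix.det_fin_three, planePoint_eq, Matrix.of_apply, Matrix.cons_val] at h67
  refine mem_span_singleton_of_eq_mul (-p 2) ?_ ?_ ?_ <;>
    simp only [planePoint_eq, Matrix.cons_val]
  · field
  · field_simp
    linear_combination -h67
  · ring

theorem mem_span_planePoint_eleven (hy : y ≠ 0)
    (h45 : (Matrix.of ![planePoint y 4, planePoint y 5, p]).det = 0)
    (h910 : (Matrix.of ![planePoint y 9, planePoint y 10, p]).det = 0) :
    p ∈ Submodule.span F {planePoint y 11} := by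
  simp only [Matrix.det_fin_three, planePoint_eq, Matrix.of_apply, Matrix.cons_val] at h45 h910
  refine mem_span_singleton_of_eq_mul (-(p 0 + p 1) / y) ?_ ?_ ?_ <;>
    simp only [planePoint_eq, Matrix.cons_val]
  · field_simp
    linear_combination -h910 - y * h45
  · field_simp
    linear_combination h910 + y * h45
  · linear_combination h45

theorem mem_span_planePoint_twelve (hy : y ≠ 0)
    (h67 : (Matrix.of ![planePoint y 6, planePoint y 7, p]).det = 0)
    (h811 : (Matrix.of ![planePoint y 8, planePoint y 11, p]).det = 0) :
    p ∈ Submodule.span F {planePoint y 12} := by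
  simp only [Matrix.det_fin_three, planePoint_eq, Matrix.of_apply, Matrix.cons_val] at h67 h811
  refine mem_span_singleton_of_eq_mul (-p 2) ?_ ?_ ?_ <;>
    simp only [planePoint_eq, Matrix.cons_val]
  · exact mul_left_cancel₀ hy (by linear_combination y ^ 2 * h67 - h811)
  · exact mul_left_cancel₀ hy (by linear_combination h811 - (y ^ 2 + y) * h67)
  · ring

theorem mem_span_planePoint_thirteen
    (h78 : (Matrix.of ![planePoint y 7, planePoint y 8, p]).det = 0)
    (h410 : (Matrix.of ![planePoint y 4, planePoint y 10, p]).det = 0) :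
    p ∈ Submodule.span F {planePoint y 13} := by
  simp only [Matrix.det_fin_three, planePoint_eq, Matrix.of_apply, Matrix.cons_val] at h78 h410
  refine mem_span_singleton_of_eq_mul (-p 2) ?_ ?_ ?_ <;>
    simp only [planePoint_eq, Matrix.cons_val]
  · linear_combination h78 + h410
  · linear_combination -h410
  · ring

end

section

variable {F K : Type*} [Field F] [Field K] {v : Fin 14 → Fin 3 → F} {x : K}

-- The points `4`, …, `8` of `planePoint y` do not depend on `y`.
theorem SameCollinearities.exists_frame (h : SameCollinearities v (planePoint x))
    (h4 : v 4 = Pi.single 0 1) (h5 : v 5 = Pi.single 1 1) (h6 : v 6 = Pi.single 2 1) :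
    ∃ w : Fin 14 → Fin 3 → F, SameCollinearities w (planePoint x) ∧
      ∀ y : F, ∀ j ∈ Finset.Icc 4 8, w j ∈ Submodule.span F {planePoint y j} := by
  have h72 : v 7 2 = 0 := by
    simpa [bracket_eq, planePoint_eq, h4, h5] using h 4 5 7
  have h71 : v 7 1 ≠ 0 := by
    simpa [bracket_eq, planePoint_eq, h4, h6] using h 4 6 7
  have h70 : v 7 0 ≠ 0 := by
    simpa [bracket_eq, planePoint_eq, h5, h6] using h 5 6 7
  have h81 : v 8 1 = 0 := by
    simpa [bracket_eq, planePoint_eq, h4, h6] using h 4 6 8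
  have h82 : v 8 2 ≠ 0 := by
    simpa [bracket_eq, planePoint_eq, h4, h5] using h 4 5 8
  have h80 : v 8 0 ≠ 0 := by
    simpa [bracket_eq, planePoint_eq, h5, h6] using h 5 6 8
  let d : Fin 3 → F := ![(v 7 0)⁻¹, -(v 7 1)⁻¹, -(v 8 0) / (v 7 0 * v 8 2)]
  have hd (l) : d l ≠ 0 := by fin_cases l <;> simp [d, *]
  refine ⟨fun j => d * v j, h.mul hd, fun y j hj => Submodule.mem_span_singleton.2 ?_⟩
  obtain rfl | rfl | rfl | rfl | rfl : j = 4 ∨ j = 5 ∨ j = 6 ∨ j = 7 ∨ j = 8 := by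
    revert j; decide
  · refine ⟨-d 0, ?_⟩
    ext l; fin_cases l <;> simp [planePoint_eq, h4]
  · refine ⟨-d 1, ?_⟩
    ext l; fin_cases l <;> simp [planePoint_eq, h5]
  · refine ⟨-d 2, ?_⟩
    ext l; fin_cases l <;> simp [planePoint_eq, h6]
  · refine ⟨1, ?_⟩
    ext l; fin_cases l <;> simp [planePoint_eq, d, h70, h71, h72]
  · have h0 : (v 7 0)⁻¹ * v 8 0 = v 8 0 / v 7 0 := by field
    have h2 : -(v 8 0) / (v 7 0 * v 8 2) * v 8 2 = -(v 8 0 / v 7 0) := by field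
    refine ⟨v 8 0 / v 7 0, ?_⟩
    ext l; fin_cases l <;> simp [planePoint_eq, d, h81, h0, h2]

theorem SameCollinearities.det_planePoint_eq_zero (h : SameCollinearities v (planePoint x)) {y : F}
    {i j k : Fin 14} (m : Fin 14) (hi : v i ∈ Submodule.span F {planePoint y i})
    (hj : v j ∈ Submodule.span F {planePoint y j})
    (hm : bracket (planePoint x) i j m ≠ 0 := by simp [bracket_eq, planePoint_eq])
    (hk : bracket (planePoint x) i j k = 0 := by simp [bracket_eq, planePoint_eq] <;> ring) :
    (Matrix.of ![planePoint y i, planePoint y j, v k]).det = 0 :=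
  (h.det_eq_zero_iff_of_mem_span hi hj hm).2 hk

theorem SameCollinearities.exists_mem_span (h : SameCollinearities v (planePoint x))
    (hx : IsPappusParameter x)
    (hframe : ∀ y : F, ∀ j ∈ Finset.Icc 4 8, v j ∈ Submodule.span F {planePoint y j}) :
    ∃ y : F, ∀ j ≥ 4, v j ∈ Submodule.span F {planePoint y j} := by
  have det_ne_zero {i j k : Fin 14} (hi : i ∈ Finset.Icc 4 8) (hj : j ∈ Finset.Icc 4 8)
      (hne : bracket (planePoint x) i j k ≠ 0) :
      (Matrix.of ![planePoint (0 : F) i, planePoint 0 j, v k]).det ≠ 0 :=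
    (h.det_eq_zero_iff_of_mem_span (hframe 0 i hi) (hframe 0 j hj) hne).not.2 hne
  have h102 : v 10 2 ≠ 0 := by
    simpa [Matrix.det_fin_three, planePoint_eq] using
      det_ne_zero (i := 4) (j := 5) (k := 10) (by decide) (by decide)
        (by simp [bracket_eq, planePoint_eq])
  have h100 : v 10 0 ≠ 0 := by
    simpa [Matrix.det_fin_three, planePoint_eq] using
      det_ne_zero (i := 5) (j := 6) (k := 10) (by decide) (by decide)
        (by simp [bracket_eq, planePoint_eq, hx.ne_zero])
  let y := -v 10 0 / v 10 2
  have hy : y ≠ 0 := div_ne_zero (neg_ne_zero.2 h100) h102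
  have h4 := hframe y 4 (by decide)
  have h5 := hframe y 5 (by decide)
  have h6 := hframe y 6 (by decide)
  have h7 := hframe y 7 (by decide)
  have h8 := hframe y 8 (by decide)
  have h9 : v 9 ∈ Submodule.span F {planePoint y 9} := mem_span_planePoint_nine
    (h.det_planePoint_eq_zero 4 h5 h6) (h.det_planePoint_eq_zero 4 h7 h8)
  have h10 : v 10 ∈ Submodule.span F {planePoint y 10} := mem_span_planePoint_ten h102
    (h.det_planePoint_eq_zero 4 h6 h7)
  have h9104 : bracket (planePoint x) 9 10 4 ≠ 0 := by
    convert hx.add_one_ne_zero using 1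
    simp only [bracket_eq, planePoint_eq, Matrix.cons_val]
    ring
  have h8114 : bracket (planePoint x) 8 11 4 ≠ 0 := by
    simp [bracket_eq, planePoint_eq, hx.ne_zero, hx.add_one_ne_zero]
  have h11 : v 11 ∈ Submodule.span F {planePoint y 11} := mem_span_planePoint_eleven hy
    (h.det_planePoint_eq_zero 6 h4 h5) (h.det_planePoint_eq_zero 4 h9 h10 h9104)
  have h12 : v 12 ∈ Submodule.span F {planePoint y 12} := mem_span_planePoint_twelve hy
    (h.det_planePoint_eq_zero 4 h6 h7) (h.det_planePoint_eq_zero 4 h8 h11 h8114)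
  have h13 : v 13 ∈ Submodule.span F {planePoint y 13} := mem_span_planePoint_thirteen
    (h.det_planePoint_eq_zero 4 h7 h8) (h.det_planePoint_eq_zero 5 h4 h10)
  refine ⟨y, fun j hj => ?_⟩
  fin_cases j <;> first | assumption | exact absurd hj (by decide)

theorem isPappusParameter_iff_bracket_ne_zero {R : Type*} [CommRing R] [IsDomain R] {x : R} :
    IsPappusParameter x ↔ bracket (planePoint x) 5 6 10 ≠ 0 ∧ bracket (planePoint x) 4 9 10 ≠ 0 ∧
      bracket (planePoint x) 5 8 10 ≠ 0 ∧ bracket (planePoint x) 4 9 12 ≠ 0 ∧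
      bracket (planePoint x) 6 11 13 ≠ 0 := by
  have h₁ : bracket (planePoint x) 5 6 10 = x := by simp [bracket_eq, planePoint_eq]
  have h₂ : bracket (planePoint x) 4 9 10 = x + 1 := by
    simp only [bracket_eq, planePoint_eq, Matrix.cons_val]
    ring
  have h₃ : bracket (planePoint x) 5 8 10 = x - 1 := by
    simp only [bracket_eq, planePoint_eq, Matrix.cons_val]
    ring
  have h₄ : bracket (planePoint x) 4 9 12 = x + 2 := by
    simp only [bracket_eq, planePoint_eq, Matrix.cons_val]
    ring
  have h₅ : bracket (planePoint x) 6 11 13 = -x * (2 * x + 1) := by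
    simp only [bracket_eq, planePoint_eq, Matrix.cons_val]
    ring
  rw [h₁, h₂, h₃, h₄, h₅]
  exact ⟨fun ⟨h₁, h₂, h₃, h₄, h₅⟩ => ⟨h₁, h₂, h₃, h₄, mul_ne_zero (neg_ne_zero.2 h₁) h₅⟩,
    fun ⟨h₁, h₂, h₃, h₄, h₅⟩ => ⟨h₁, h₂, h₃, h₄, right_ne_zero_of_mul h₅⟩⟩

theorem SameCollinearities.exists_isPappusParameter (h : SameCollinearities v (planePoint x))
    (hx : IsPappusParameter x) (h4 : v 4 = Pi.single 0 1) (h5 : v 5 = Pi.single 1 1)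
    (h6 : v 6 = Pi.single 2 1) : ∃ y : F, IsPappusParameter y := by
  obtain ⟨w, hw, hframe⟩ := h.exists_frame h4 h5 h6
  obtain ⟨y, hy⟩ := hw.exists_mem_span hx hframe
  have transfer (i j k : Fin 14) (hijk : 4 ≤ i ∧ 4 ≤ j ∧ 4 ≤ k)
      (hne : bracket (planePoint x) i j k ≠ 0) : bracket (planePoint y) i j k ≠ 0 :=
    bracket_ne_zero_of_mem_span ((hw i j k).not.2 hne) (hy i hijk.1) (hy j hijk.2.1) (hy k hijk.2.2)
  obtain ⟨h₁, h₂, h₃, h₄, h₅⟩ := isPappusParameter_iff_bracket_ne_zero.1 hx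
  refine ⟨y, isPappusParameter_iff_bracket_ne_zero.2 ⟨?_, ?_, ?_, ?_, ?_⟩⟩
  · exact transfer 5 6 10 (by decide) h₁
  · exact transfer 4 9 10 (by decide) h₂
  · exact transfer 5 8 10 (by decide) h₃
  · exact transfer 4 9 12 (by decide) h₄
  · exact transfer 6 11 13 (by decide) h₅

end

theorem exists_sameCollinearities_planePoint {K F : Type*} [Field K] [Field F] {x : K}
    (h : RealizesColumnMatroid (Matrix.of (pappusPoint x)).transpose F) :
    ∃ v : Fin 14 → Fin 3 → F, SameCollinearities v (planePoint x) ∧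
      v 4 = Pi.single 0 1 ∧ v 5 = Pi.single 1 1 ∧ v 6 = Pi.single 2 1 := by
  obtain ⟨n, B, hB : ∀ S, LinearIndepOn F B.transpose S ↔ LinearIndepOn K (pappusPoint x) S⟩ := h
  have he : LinearIndependent K (pappusPoint x ∘ ![0, 4, 5, 6]) := by
    rw [linearIndependent_iff_det_ne_zero]
    simp [Matrix.det_succ_row_zero, Fin.sum_univ_succ, pappusPoint, Fin.succAbove]
  have hspan (j) :
      pappusPoint x j ∈ Submodule.span K (Set.range (pappusPoint x ∘ ![0, 4, 5, 6])) := by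
    rw [he.span_eq_top_of_card_eq_finrank' (by simp)]
    trivial
  obtain ⟨p, hpe, hp⟩ := exists_coordinates_of_linearIndepOn_iff hB he hspan
  have hp0 : p 0 = Pi.single 0 1 := hpe 0
  refine ⟨fun j => Matrix.vecTail (p j), fun i j k => ?_, ?_, ?_, ?_⟩
  · rw [bracket_vecTail hp0, det_comp_eq_zero_iff_of_linearIndepOn_iff hp,
      ← bracket_vecTail (by ext l; fin_cases l <;> rfl)]
    rfl
  · exact (congrArg Matrix.vecTail (hpe 1)).trans (vecTail_single_succ 0)
  · exact (congrArg Matrix.vecTail (hpe 2)).trans (vecTail_single_succ 1)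
  · exact (congrArg Matrix.vecTail (hpe 3)).trans (vecTail_single_succ 2)

theorem realizesColumnMatroid_pappusPoint_iff {K F : Type*} [Field K] [Field F] {x : K}
    (hx : IsPappusParameter x) :
    RealizesColumnMatroid (Matrix.of (pappusPoint x)).transpose F ↔
      ∃ y : F, IsPappusParameter y := by
  constructor
  · intro h
    obtain ⟨v, hv, h4, h5, h6⟩ := exists_sameCollinearities_planePoint h
    exact hv.exists_isPappusParameter hx h4 h5 h6
  · rintro ⟨y, hy⟩
    exact ⟨4, (Matrix.of (pappusPoint y)).transpose, fun S => linearIndepOn_pappusPoint_iff hx hy⟩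

/-! ### Fields with an admissible parameter -/

section

variable {F : Type*} [Field F]

theorem exists_isPappusParameter_of_two_eq_zero (h2 : (2 : F) = 0) (hF : 3 ≤ ENat.card F) :
    ∃ x : F, IsPappusParameter x := by
  obtain ⟨x, hx0, hx1⟩ := ENat.exists_ne_ne_of_three_le hF 0 1
  have hx1' : x - 1 ≠ 0 := sub_ne_zero.2 hx1
  have hadd : x + 1 ≠ 0 := by convert hx1' using 1; linear_combination h2
  exact ⟨x, hx0, hadd, hx1', by simpa [h2], by simp [h2]⟩

theorem exists_isPappusParameter_of_two_ne_zero (h2 : (2 : F) ≠ 0) (hF : 5 < ENat.card F) :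
    ∃ x : F, IsPappusParameter x := by
  classical
  obtain ⟨x, hx⟩ := Finset.exists_not_mem_of_card_lt_enatCard
    (s := ({0, -1, 1, -2, -1 / 2} : Finset F))
    ((Nat.cast_le.2 Finset.card_le_five).trans_lt hF)
  simp only [Finset.mem_insert, Finset.mem_singleton, not_or] at hx
  obtain ⟨h₀, h₁, h₃, h₄, h₅⟩ := hx
  refine ⟨x, h₀, fun h => h₁ (by linear_combination h), fun h => h₃ (by linear_combination h),
    fun h => h₄ (by linear_combination h), fun h => h₅ ?_⟩
  field_simp
  linear_combination h

theorem two_eq_zero_of_card_eq_four (hF : Nat.card F = 4) : (2 : F) = 0 := by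
  have : Fintype F := @Fintype.ofFinite F (Nat.finite_of_card_ne_zero (by simp [hF]))
  have hcast : ((Fintype.card F : ℕ) : F) = 0 := Nat.cast_card_eq_zero F
  rw [← Nat.card_eq_fintype_card, hF] at hcast
  exact pow_eq_zero_iff two_ne_zero |>.1 (by push_cast at hcast; linear_combination hcast)

theorem IsPappusParameter.card_eq_four_or_seven_le [Fintype F] {x : F} (hx : IsPappusParameter x) :
    Fintype.card F = 4 ∨ 7 ≤ Fintype.card F := by
  obtain ⟨h₀, h₁, h₂, h₃, h₄⟩ := hx
  have hpow := FiniteField.pow_card x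
  have hcast : ((Fintype.card F : ℕ) : F) = 0 := Nat.cast_card_eq_zero F
  have hpp := FiniteField.isPrimePow_card F
  generalize Fintype.card F = q at *
  by_contra! hq
  obtain ⟨hq4, hq7⟩ := hq
  interval_cases q
  · exact not_isPrimePow_zero hpp
  · exact not_isPrimePow_one hpp
  · exact mul_ne_zero h₀ h₂ (by linear_combination hpow)
  · exact mul_ne_zero (mul_ne_zero h₀ h₂) h₁ (by linear_combination hpow)
  · exact hq4 rfl
  · push_cast at hcast
    have hsq : x ^ 2 + 1 = 0 := by
      refine (mul_eq_zero.1 ?_).resolve_left (mul_ne_zero (mul_ne_zero h₀ h₂) h₁)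
      linear_combination hpow
    exact mul_ne_zero h₃ h₄ (by linear_combination 2 * hsq + x * hcast)
  · revert hpp
    rw [isPrimePow_nat_iff_bounded]
    decide

theorem exists_isPappusParameter_iff :
    (∃ x : F, IsPappusParameter x) ↔ Infinite F ∨ Nat.card F = 4 ∨ 7 ≤ Nat.card F := by
  constructor
  · rintro ⟨x, hx⟩
    rcases fintypeOrInfinite F with _ | _
    · rw [Nat.card_eq_fintype_card]
      exact Or.inr hx.card_eq_four_or_seven_le
    · exact Or.inl ‹_›
  · intro hF
    by_cases h2 : (2 : F) = 0
    · refine exists_isPappusParameter_of_two_eq_zero h2 ?_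
      exact Order.add_one_le_of_lt <|
        lt_enatCard_of_infinite_or_lt_natCard (n := 2) (hF.imp_right (by omega))
    · refine exists_isPappusParameter_of_two_ne_zero h2 ?_
      refine lt_enatCard_of_infinite_or_lt_natCard (n := 5) (hF.imp_right fun h => ?_)
      have := h.resolve_left (mt two_eq_zero_of_card_eq_four h2)
      omega

end

/-- A field `F` realizes the column matroid of `[I₄ | D₄ | P₀]` iff `F` is infinite, has
exactly 4 elements, or has at least 7 elements (the universal partial field of this
matroid is the Pappus-template partial field `𝔓𝕋`). -/
theorem stmt_17 (α : GaloisField 2 2) (hα : α ^ 2 = α + 1) (F : Type*) [Field F] :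
    RealizesColumnMatroid (matI4D4P0 α) F ↔
      (Infinite F ∨ Nat.card F = 4 ∨ 7 ≤ Nat.card F) := by
  rw [matI4D4P0_eq_transpose_pappusPoint hα,
    realizesColumnMatroid_pappusPoint_iff (isPappusParameter_of_sq_eq_add_one hα)]
  exact exists_isPappusParameter_iff
end
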